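/- Let u ∈ ℝ[x_1,…,x_d] have total degree at most 4, let v ∈ P_A, and let w ∈ P_A satisfy w(a) = u(a) and ∇w(a) = ∇u(a) at every vertex a of K. Then for every index i with 1 ≤ i ≤ d, ∫_K ∂²(u − w)/∂x_i² · ∂²v/∂x_i² dx = − Σ_{j ≠ i} (h_j²/3) ∫_K ∂⁴u/∂x_i²∂x_j² · ∂²v/∂x_i² dx. -/

import Mathlib

open MvPolynomial MeasureTheory

/-- `Q₁`: the span of the monomials `x^α` with `α i ≤ 1` for every `i`. -/
noncomputable def Q1 (d : ℕ) : Submodule ℝ (MvPolynomial (Fin d) ℝ) :=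
  Submodule.span ℝ {p | ∃ α : Fin d →₀ ℕ, (∀ i, α i ≤ 1) ∧ p = monomial α (1 : ℝ)}

/-- The Adini shape function space `P_A = Q₁ + span{x_i² q : 1 ≤ i ≤ d, q ∈ Q₁}`. -/
noncomputable def PA (d : ℕ) : Submodule ℝ (MvPolynomial (Fin d) ℝ) :=
  Q1 d ⊔ Submodule.span ℝ {p | ∃ i : Fin d, ∃ q ∈ Q1 d, p = X i ^ 2 * q}

/-- `Q₁^i`: elements of `Q₁` of degree 0 in `x_i`. -/
noncomputable def Q1i (d : ℕ) (i : Fin d) : Submodule ℝ (MvPolynomial (Fin d) ℝ) :=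
  Submodule.span ℝ
    {p | ∃ α : Fin d →₀ ℕ, (∀ j, α j ≤ 1) ∧ α i = 0 ∧ p = monomial α (1 : ℝ)}

/-- `S^i = span{((x_j − c_j)² − h_j²) q̂ : 1 ≤ j ≤ d, q̂ ∈ Q₁^i}`. -/
noncomputable def Si (d : ℕ) (c h : Fin d → ℝ) (i : Fin d) :
    Submodule ℝ (MvPolynomial (Fin d) ℝ) :=
  Submodule.span ℝ
    {p | ∃ j : Fin d, ∃ q ∈ Q1i d i, p = ((X j - C (c j)) ^ 2 - C (h j ^ 2)) * q}

/-- The vertices of the `d`-rectangle with centre `c` and half-lengths `h`. -/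
def IsVertex {d : ℕ} (c h : Fin d → ℝ) (a : Fin d → ℝ) : Prop :=
  ∀ i, a i = c i - h i ∨ a i = c i + h i

/-- The `d`-rectangle `K = ∏_i [c_i − h_i, c_i + h_i]`. -/
def box {d : ℕ} (c h : Fin d → ℝ) : Set (Fin d → ℝ) :=
  Set.univ.pi fun i => Set.Icc (c i - h i) (c i + h i)

/-- The iterated partial derivative `∂^α`. -/
noncomputable def pderivPow {d : ℕ} (α : Fin d → ℕ) :
    MvPolynomial (Fin d) ℝ →ₗ[ℝ] MvPolynomial (Fin d) ℝ :=
  (List.ofFn fun i : Fin d =>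
    ((pderiv (R := ℝ) i).toLinearMap :
        Module.End ℝ (MvPolynomial (Fin d) ℝ)) ^ α i).prod

/-!
Fix `i` and put `e = u - w`. All the polynomials `∂ⱼ²∂ᵢ²e` are constants `γⱼ`, and `Q₁` is exactly
the common kernel of the operators `∂ⱼ²`, so `∂ᵢ²e` is, modulo `Q₁`, the combination of the shifted
Legendre polynomials `ℓⱼ = 3 (xⱼ - cⱼ)² - hⱼ²` with coefficients `γⱼ / 6`. An element of `Q₁` is
determined by its values at the vertices of `K`. There each `ℓⱼ` equals `2 hⱼ²`, while `∂ᵢ²e` equals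
`γᵢ hᵢ² / 3`, because on an edge parallel to the `i`-th axis `e` is a quartic with double zeros at
both ends. Hence
`∂ᵢ²e = ∑ⱼ (γⱼ / 6) ℓⱼ - ∑_{j ≠ i} γⱼ hⱼ² / 3`,
and the claim follows by integrating against `∂ᵢ²v ∈ Q₁`, which is `L²(K)`-orthogonal to every `ℓⱼ`.
-/

section PartialDerivatives

variable {σ R : Type*} [CommSemiring R]

lemma pderiv_comm (i j : σ) (p : MvPolynomial σ R) :
    pderiv i (pderiv j p) = pderiv j (pderiv i p) := by
  classical
  rcases eq_or_ne i j with rfl | hij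
  · rfl
  ext m
  simp only [coeff_pderiv, Finsupp.add_apply, Finsupp.single_eq_of_ne hij,
    Finsupp.single_eq_of_ne hij.symm, add_zero, add_right_comm m]
  ring

lemma totalDegree_pderiv_le (i : σ) (p : MvPolynomial σ R) :
    (pderiv i p).totalDegree ≤ p.totalDegree - 1 := by
  classical
  refine Finset.sup_le fun m hm => Nat.le_sub_one_of_lt ?_
  have hmem : m + Finsupp.single i 1 ∈ p.support := by
    rw [mem_support_iff, coeff_pderiv] at hm
    exact mem_support_iff.2 (left_ne_zero_of_mul hm)
  have hdeg := le_totalDegree hmem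
  rw [Finsupp.sum_add_index' (fun _ => rfl) (fun _ _ _ => rfl),
    Finsupp.sum_single_index rfl] at hdeg
  exact hdeg

lemma totalDegree_pderiv_sq_pderiv_sq_eq_zero {p : MvPolynomial σ R} (hp : p.totalDegree ≤ 4)
    (i j : σ) :
    (pderiv i (pderiv i (pderiv j (pderiv j p)))).totalDegree = 0 := by
  have h₁ := totalDegree_pderiv_le j p
  have h₂ := totalDegree_pderiv_le j (pderiv j p)
  have h₃ := totalDegree_pderiv_le i (pderiv j (pderiv j p))
  have h₄ := totalDegree_pderiv_le i (pderiv i (pderiv j (pderiv j p)))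
  lia

lemma pderiv_pderiv_eq_zero_iff_degreeOf_le_one [NoZeroDivisors R] [CharZero R] (i : σ)
    (p : MvPolynomial σ R) : pderiv i (pderiv i p) = 0 ↔ p.degreeOf i ≤ 1 := by
  classical
  have coeff_eq (m : σ →₀ ℕ) : coeff m (pderiv i (pderiv i p)) =
      coeff (m + Finsupp.single i 2) p * (((m i + 1 + 1) * (m i + 1) : ℕ) : R) := by
    simp only [coeff_pderiv, add_assoc m, ← Finsupp.single_add, Finsupp.add_apply,
      Finsupp.single_eq_same, mul_assoc]
    push_cast
    rfl
  rw [degreeOf_le_iff]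
  constructor
  · intro hp m hm
    by_contra! hmi
    have hsub : m - Finsupp.single i 2 + Finsupp.single i 2 = m :=
      tsub_add_cancel_of_le (Finsupp.single_le_iff.2 hmi)
    have hcoeff := coeff_eq (m - Finsupp.single i 2)
    rw [hp, coeff_zero, hsub, eq_comm, mul_eq_zero, Nat.cast_eq_zero] at hcoeff
    exact mem_support_iff.1 hm (hcoeff.resolve_right (by positivity))
  · intro hp
    ext m
    have hnot : m + Finsupp.single i 2 ∉ p.support := fun hm => by
      simpa using hp _ hm
    rw [coeff_eq, notMem_support_iff.1 hnot, zero_mul, coeff_zero]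

end PartialDerivatives

section CoordinateLine

variable {σ R : Type*} [DecidableEq σ] [CommSemiring R]

/-- The restriction of a polynomial to the line through `a` parallel to the `i`-th coordinate axis,
parametrised by the `i`-th coordinate itself. -/
noncomputable def restrictLine (a : σ → R) (i : σ) : MvPolynomial σ R →ₐ[R] Polynomial R :=
  aeval (Function.update (fun k => Polynomial.C (a k)) i Polynomial.X)

lemma eval_restrictLine (a : σ → R) (i : σ) (t : R) (p : MvPolynomial σ R) :
    (restrictLine a i p).eval t = eval (Function.update a i t) p := by
  induction p using MvPolynomial.induction_on with
  | C r => simp [restrictLine]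
  | add p q hp hq => simp [hp, hq]
  | mul_X p k hp =>
    rcases eq_or_ne k i with rfl | hk <;> simp_all [restrictLine]

lemma derivative_restrictLine (a : σ → R) (i : σ) (p : MvPolynomial σ R) :
    Polynomial.derivative (restrictLine a i p) = restrictLine a i (pderiv i p) := by
  induction p using MvPolynomial.induction_on with
  | C r => simp [restrictLine]
  | add p q hp hq => simp [hp, hq]
  | mul_X p k hp =>
    rcases eq_or_ne k i with rfl | hk
    · simp_all [restrictLine, mul_comm]
    · simp_all [restrictLine, pderiv_X_of_ne hk, mul_comm]

end CoordinateLine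

section Quartic

open Polynomial (derivative)

variable {R : Type*} [CommRing R] [IsDomain R]

lemma eval_derivative_derivative_of_double_roots {f : Polynomial R} (hf : f.natDegree ≤ 4)
    {s t : R} (hst : s ≠ t) (hs : f.eval s = 0) (ht : f.eval t = 0)
    (hs' : (derivative f).eval s = 0) (ht' : (derivative f).eval t = 0) :
    12 * (derivative (derivative f)).eval s =
      (t - s) ^ 2 * (derivative (derivative (derivative (derivative f)))).eval s := by
  have hsq : (t - s) ^ 2 ≠ 0 := pow_ne_zero 2 (sub_ne_zero.2 hst.symm)
  refine mul_left_cancel₀ hsq ?_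
  rw [f.as_sum_range_C_mul_X_pow' (Nat.lt_succ_of_le hf)] at hs ht hs' ht' ⊢
  simp only [Finset.sum_range_succ, Finset.sum_range_zero, Polynomial.derivative_add,
    Polynomial.derivative_C_mul_X_pow, Polynomial.derivative_zero, Polynomial.eval_add,
    Polynomial.eval_mul, Polynomial.eval_pow, Polynomial.eval_X, Polynomial.eval_C,
    Polynomial.eval_zero] at hs ht hs' ht' ⊢
  push_cast at hs ht hs' ht' ⊢
  linear_combination 72 * ht - 72 * hs - 48 * (t - s) * hs' - 24 * (t - s) * ht'

lemma eval_pderiv_pderiv_of_double_roots {σ : Type*} [DecidableEq σ] [CharZero R]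
    {e : MvPolynomial σ R} {i : σ} {γ : R}
    (hquartic : pderiv i (pderiv i (pderiv i (pderiv i e))) = C γ)
    {a : σ → R} {t : R} (hat : a i ≠ t) (ha : eval a e = 0)
    (ht : eval (Function.update a i t) e = 0) (ha' : eval a (pderiv i e) = 0)
    (ht' : eval (Function.update a i t) (pderiv i e) = 0) :
    12 * eval a (pderiv i (pderiv i e)) = (t - a i) ^ 2 * γ := by
  have eval_self (p : MvPolynomial σ R) : (restrictLine a i p).eval (a i) = eval a p := by
    rw [eval_restrictLine, Function.update_eq_self]
  have hdeg : (restrictLine a i e).natDegree ≤ 4 := by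
    have hconst := congrArg (Polynomial.natDegree ∘ restrictLine a i) hquartic
    simp only [Function.comp_apply, ← derivative_restrictLine, Polynomial.natDegree_derivative,
      algHom_C, Polynomial.algebraMap_eq, Polynomial.natDegree_C] at hconst
    lia
  have key := eval_derivative_derivative_of_double_roots hdeg hat
  simp only [derivative_restrictLine, eval_self, eval_restrictLine, hquartic, eval_C] at key
  exact key ha ht ha' ht'

end Quartic

section ShapeFunctions

variable {d : ℕ}

lemma Q1_eq_restrictDegree : Q1 d = restrictDegree (Fin d) ℝ 1 := by
  rw [Q1, restrictDegree, restrictSupport_eq_span]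
  congr 1
  ext p
  simp [eq_comm]

lemma mem_Q1_iff_pderiv_pderiv_eq_zero {q : MvPolynomial (Fin d) ℝ} :
    q ∈ Q1 d ↔ ∀ i, pderiv i (pderiv i q) = 0 := by
  simp only [Q1_eq_restrictDegree, mem_restrictDegree, pderiv_pderiv_eq_zero_iff_degreeOf_le_one,
    degreeOf_le_iff]
  exact ⟨fun hq i m hm => hq m hm i, fun hq m hm i => hq i m hm⟩

lemma X_mul_pderiv_mem_Q1 (i : Fin d) {q : MvPolynomial (Fin d) ℝ} (hq : q ∈ Q1 d) :
    X i * pderiv i q ∈ Q1 d := by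
  rw [mem_Q1_iff_pderiv_pderiv_eq_zero] at hq ⊢
  intro j
  rcases eq_or_ne i j with rfl | hij
  · simp [hq]
  · simp [pderiv_X_of_ne hij, pderiv_comm j i, hq]

lemma pderiv_pderiv_X_sq_mul_mem_Q1 (i k : Fin d) {q : MvPolynomial (Fin d) ℝ} (hq : q ∈ Q1 d) :
    pderiv i (pderiv i (X k ^ 2 * q)) ∈ Q1 d := by
  have hqi := mem_Q1_iff_pderiv_pderiv_eq_zero.1 hq i
  rcases eq_or_ne k i with rfl | hki
  · have hleibniz : pderiv k (pderiv k (X k ^ 2 * q)) =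
        (2 : ℝ) • q + (4 : ℝ) • (X k * pderiv k q) := by
      simp only [pow_two, pderiv_mul, pderiv_X_self, pderiv_one, map_add, hqi, smul_eq_C_mul,
        map_ofNat]
      ring
    rw [hleibniz]
    exact add_mem (Submodule.smul_mem _ _ hq) (Submodule.smul_mem _ _ (X_mul_pderiv_mem_Q1 k hq))
  · simp [pow_two, pderiv_X_of_ne hki, hqi]

lemma pderiv_pderiv_mem_Q1_of_mem_PA (i : Fin d) {v : MvPolynomial (Fin d) ℝ} (hv : v ∈ PA d) :
    pderiv i (pderiv i v) ∈ Q1 d := by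
  suffices PA d ≤ (Q1 d).comap ((pderiv i).toLinearMap ∘ₗ (pderiv i).toLinearMap) from this hv
  refine sup_le (fun q hq => ?_) (Submodule.span_le.2 ?_)
  · have hqi := mem_Q1_iff_pderiv_pderiv_eq_zero.1 hq i
    simp [hqi]
  · rintro _ ⟨k, q, hq, rfl⟩
    exact pderiv_pderiv_X_sq_mul_mem_Q1 i k hq

lemma eq_zero_of_mem_Q1_of_eval_vertex_eq_zero {c h : Fin d → ℝ} (hh : ∀ i, 0 < h i)
    {q : MvPolynomial (Fin d) ℝ} (hq : q ∈ Q1 d) (hvertex : ∀ a, IsVertex c h a → eval a q = 0) :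
    q = 0 := by
  refine eq_zero_of_eval_zero_at_prod_finset q (fun i => {c i - h i, c i + h i}) (fun i => ?_)
    fun a ha => hvertex a fun i => by simpa using ha i
  rw [Finset.card_pair (by linarith [hh i])]
  exact Nat.lt_succ_of_le <| (pderiv_pderiv_eq_zero_iff_degreeOf_le_one i q).1 <|
    mem_Q1_iff_pderiv_pderiv_eq_zero.1 hq i

end ShapeFunctions

section BoxIntegral

variable {d : ℕ}

lemma integrableOn_box_eval (c h : Fin d → ℝ) (p : MvPolynomial (Fin d) ℝ) :
    IntegrableOn (fun x => eval x p) (box c h) :=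
  (continuous_eval p).continuousOn.integrableOn_compact (isCompact_univ_pi fun _ => isCompact_Icc)

/-- Integration of polynomials over the `d`-rectangle, as a linear functional. -/
noncomputable def boxIntegral (c h : Fin d → ℝ) : MvPolynomial (Fin d) ℝ →ₗ[ℝ] ℝ where
  toFun p := ∫ x in box c h, eval x p
  map_add' p q := by
    simpa only [map_add] using
      integral_add (integrableOn_box_eval c h p) (integrableOn_box_eval c h q)
  map_smul' r p := by
    simpa only [smul_eval, RingHom.id_apply, smul_eq_mul] using
      integral_const_mul r fun x => eval x p

lemma boxIntegral_mul (c h : Fin d → ℝ) (p q : MvPolynomial (Fin d) ℝ) :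
    boxIntegral c h (p * q) = ∫ x in box c h, eval x p * eval x q := by
  simp only [boxIntegral, LinearMap.coe_mk, AddHom.coe_mk, map_mul]

/-- The quadratic Legendre polynomial in the `j`-th variable, transported to
`[c j - h j, c j + h j]` and scaled by `2 h j ^ 2` to clear denominators. -/
noncomputable def boxLegendre (c h : Fin d → ℝ) (j : Fin d) : MvPolynomial (Fin d) ℝ :=
  C 3 * (X j - C (c j)) ^ 2 - C (h j ^ 2)

lemma eval_boxLegendre (c h x : Fin d → ℝ) (j : Fin d) :
    eval x (boxLegendre c h j) = 3 * (x j - c j) ^ 2 - h j ^ 2 := by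
  simp [boxLegendre]

lemma IsVertex.sub_center_sq {c h a : Fin d → ℝ} (ha : IsVertex c h a) (j : Fin d) :
    (a j - c j) ^ 2 = h j ^ 2 := by
  rcases ha j with hj | hj <;> rw [hj] <;> ring

lemma IsVertex.eval_boxLegendre {c h a : Fin d → ℝ} (ha : IsVertex c h a) (j : Fin d) :
    eval a (boxLegendre c h j) = 2 * h j ^ 2 := by
  rw [_root_.eval_boxLegendre, ha.sub_center_sq]
  ring

lemma pderiv_pderiv_boxLegendre (c h : Fin d → ℝ) (k j : Fin d) :
    pderiv k (pderiv k (boxLegendre c h j)) = if j = k then C 6 else 0 := by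
  split_ifs with hjk
  · subst hjk
    simp only [boxLegendre, pow_two, pderiv_mul, map_sub, map_add, pderiv_C, pderiv_X_self,
      pderiv_one, map_zero]
    simp only [map_ofNat]
    ring
  · simp [boxLegendre, pow_two, pderiv_X_of_ne hjk]

-- With `P = ((x - s) ^ 2 - t ^ 2) ^ 2 / 4`, the weight is `P''` and `P' * x ^ k - P * (x ^ k)'` is
-- a primitive of the integrand because `(x ^ k)'' = 0`.
lemma integral_quadratic_legendre_mul_pow_eq_zero (s t : ℝ) {k : ℕ} (hk : k ≤ 1) :
    ∫ x in (s - t)..(s + t), (3 * (x - s) ^ 2 - t ^ 2) * x ^ k = 0 := by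
  have hderiv : ∀ x ∈ Set.uIcc (s - t) (s + t),
      HasDerivAt (fun x => (x - s) * ((x - s) ^ 2 - t ^ 2) * x ^ k
        - ((x - s) ^ 2 - t ^ 2) ^ 2 / 4 * k) ((3 * (x - s) ^ 2 - t ^ 2) * x ^ k) x := by
    intro x _
    have hlin : HasDerivAt (fun x : ℝ => x - s) 1 x := (hasDerivAt_id x).sub_const s
    have hquad := (hlin.pow 2).sub_const (t ^ 2)
    refine (((hlin.mul hquad).mul (hasDerivAt_pow k x)).sub
      (((hquad.pow 2).div_const 4).mul_const (k : ℝ))).congr_deriv ?_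
    interval_cases k <;> simp <;> ring
  rw [intervalIntegral.integral_eq_sub_of_hasDerivAt hderiv
    (Continuous.intervalIntegrable (by fun_prop) _ _)]
  ring

lemma boxIntegral_boxLegendre_mul_monomial {c h : Fin d → ℝ} {j : Fin d} (hj : 0 < h j)
    {α : Fin d →₀ ℕ} (hα : α j ≤ 1) :
    boxIntegral c h (boxLegendre c h j * monomial α 1) = 0 := by
  have eval_eq_prod (x : Fin d → ℝ) : eval x (boxLegendre c h j) * eval x (monomial α (1 : ℝ)) =
      ∏ k, (if k = j then 3 * (x k - c k) ^ 2 - h k ^ 2 else 1) * x k ^ α k := by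
    rw [Finset.prod_mul_distrib, eval_monomial, Finsupp.prod_fintype _ _ (by simp)]
    simp [eval_boxLegendre]
  simp only [boxIntegral_mul, eval_eq_prod]
  rw [box, volume_pi, Measure.restrict_pi_pi, integral_fintype_prod_eq_prod (𝕜 := ℝ)
    fun k (t : ℝ) => (if k = j then 3 * (t - c k) ^ 2 - h k ^ 2 else 1) * t ^ α k]
  refine Finset.prod_eq_zero (Finset.mem_univ j) ?_
  simp only [if_true]
  rw [integral_Icc_eq_integral_Ioc, ← intervalIntegral.integral_of_le (by linarith)]
  exact integral_quadratic_legendre_mul_pow_eq_zero (c j) (h j) hα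

lemma boxIntegral_boxLegendre_mul_eq_zero {c h : Fin d → ℝ} {j : Fin d} (hj : 0 < h j)
    {q : MvPolynomial (Fin d) ℝ} (hq : q ∈ Q1 d) :
    boxIntegral c h (boxLegendre c h j * q) = 0 := by
  suffices Q1 d ≤ LinearMap.ker (boxIntegral c h ∘ₗ LinearMap.mulLeft ℝ (boxLegendre c h j)) from
    this hq
  refine Submodule.span_le.2 ?_
  rintro _ ⟨α, hα, rfl⟩
  exact boxIntegral_boxLegendre_mul_monomial hj (hα j)

end BoxIntegral

section InterpolationError

variable {d : ℕ} {c h : Fin d → ℝ} {i : Fin d}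

lemma IsVertex.update_reflect {a : Fin d → ℝ} (ha : IsVertex c h a) (i : Fin d) :
    IsVertex c h (Function.update a i (2 * c i - a i)) := by
  intro k
  rcases eq_or_ne k i with rfl | hk
  · rw [Function.update_self]
    exact (ha k).symm.imp (fun hak => by linarith) fun hak => by linarith
  · rw [Function.update_of_ne hk]
    exact ha k

variable {e : MvPolynomial (Fin d) ℝ}

lemma IsVertex.eval_pderiv_pderiv {γ : ℝ} (hi : 0 < h i)
    (hquartic : pderiv i (pderiv i (pderiv i (pderiv i e))) = C γ)
    (hval : ∀ a, IsVertex c h a → eval a e = 0)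
    (hder : ∀ a, IsVertex c h a → eval a (pderiv i e) = 0) {a : Fin d → ℝ}
    (ha : IsVertex c h a) : eval a (pderiv i (pderiv i e)) = γ * h i ^ 2 / 3 := by
  have hsq := ha.sub_center_sq i
  have hne : a i ≠ 2 * c i - a i := fun heq => by
    have hzero : a i - c i = 0 := by linarith
    rw [hzero] at hsq
    nlinarith
  have hopp := ha.update_reflect i
  have key := eval_pderiv_pderiv_of_double_roots hquartic hne (hval a ha) (hval _ hopp)
    (hder a ha) (hder _ hopp)
  linear_combination key / 12 + γ / 3 * hsq

theorem pderiv_pderiv_eq_sum_boxLegendre_sub {γ : Fin d → ℝ} (hh : ∀ j, 0 < h j)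
    (hγ : ∀ j, pderiv j (pderiv j (pderiv i (pderiv i e))) = C (γ j))
    (hval : ∀ a, IsVertex c h a → eval a e = 0)
    (hder : ∀ a, IsVertex c h a → eval a (pderiv i e) = 0) :
    pderiv i (pderiv i e) = ∑ j, (γ j / 6) • boxLegendre c h j -
      C (∑ j ∈ Finset.univ.erase i, h j ^ 2 / 3 * γ j) := by
  rw [← sub_eq_zero]
  refine eq_zero_of_mem_Q1_of_eval_vertex_eq_zero (c := c) hh
    (mem_Q1_iff_pderiv_pderiv_eq_zero.2 fun k => ?_) fun a ha => ?_
  · have hlegendre : pderiv k (pderiv k (∑ j, (γ j / 6) • boxLegendre c h j)) = C (γ k) := by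
      simp only [map_sum, Derivation.map_smul, pderiv_pderiv_boxLegendre, smul_ite, smul_zero,
        Finset.sum_ite_eq', Finset.mem_univ, if_true]
      rw [smul_eq_C_mul, ← C_mul, div_mul_cancel₀ _ (by norm_num)]
    simp only [map_sub, hlegendre, hγ, pderiv_C, sub_zero, sub_self]
  · have hsum := Finset.add_sum_erase Finset.univ (fun j => h j ^ 2 / 3 * γ j) (Finset.mem_univ i)
    have hvertex : ∑ j, γ j / 6 * (2 * h j ^ 2) = ∑ j, h j ^ 2 / 3 * γ j :=
      Finset.sum_congr rfl fun j _ => by ring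
    simp only [map_sub, map_sum, smul_eval, ha.eval_boxLegendre, eval_C,
      IsVertex.eval_pderiv_pderiv (hh i) (hγ i) hval hder ha, hvertex, ← hsum]
    ring

end InterpolationError

theorem adini_pure_terms_identity_general {d : ℕ} {c h : Fin d → ℝ} (hh : ∀ j, 0 < h j)
    (i : Fin d) {u w q : MvPolynomial (Fin d) ℝ}
    (hu : ∀ j, (pderiv i (pderiv i (pderiv j (pderiv j u)))).totalDegree = 0)
    (hw : pderiv i (pderiv i w) ∈ Q1 d) (hq : q ∈ Q1 d)
    (hmatch : ∀ a, IsVertex c h a →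
      eval a w = eval a u ∧ eval a (pderiv i w) = eval a (pderiv i u)) :
    ∫ x in box c h, eval x (pderiv i (pderiv i (u - w))) * eval x q =
      - ∑ j ∈ Finset.univ.erase i, (h j ^ 2 / 3) *
          ∫ x in box c h, eval x (pderiv i (pderiv i (pderiv j (pderiv j u)))) * eval x q := by
  choose γ hγ using fun j => (⟨_, totalDegree_eq_zero_iff_eq_C.1 (hu j)⟩ :
    ∃ r, pderiv i (pderiv i (pderiv j (pderiv j u))) = C r)
  have hγ_error (j : Fin d) : pderiv j (pderiv j (pderiv i (pderiv i (u - w)))) = C (γ j) := by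
    simp only [map_sub, mem_Q1_iff_pderiv_pderiv_eq_zero.1 hw j, sub_zero]
    simp only [← hγ j, pderiv_comm j i]
  have herror := pderiv_pderiv_eq_sum_boxLegendre_sub hh hγ_error
    (fun a ha => by rw [map_sub, (hmatch a ha).1, sub_self])
    fun a ha => by rw [map_sub, map_sub, (hmatch a ha).2, sub_self]
  have horth : boxIntegral c h ((∑ j, (γ j / 6) • boxLegendre c h j) * q) = 0 := by
    simp [Finset.sum_mul, boxIntegral_boxLegendre_mul_eq_zero (hh _) hq]
  simp_rw [← boxIntegral_mul, herror, sub_mul, map_sub, horth, zero_sub, hγ, ← smul_eq_C_mul,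
    map_smul, smul_eq_mul, Finset.sum_mul, mul_assoc]

/-- for `u` of total degree at most 4, `v ∈ P_A`, and `w ∈ P_A` the Adini
canonical interpolant of `u`, for every `i`,
`∫_K ∂²(u−w)/∂x_i² ∂²v/∂x_i² = − Σ_{j≠i} (h_j²/3) ∫_K ∂⁴u/∂x_i²∂x_j² ∂²v/∂x_i²`. -/
theorem adini_pure_terms_identity (d : ℕ) (hd : 1 ≤ d)
    (c h : Fin d → ℝ) (hh : ∀ i, 0 < h i)
    (u : MvPolynomial (Fin d) ℝ) (hu : u.totalDegree ≤ 4)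
    (v : MvPolynomial (Fin d) ℝ) (hv : v ∈ PA d)
    (w : MvPolynomial (Fin d) ℝ) (hw : w ∈ PA d)
    (hmatch : ∀ a : Fin d → ℝ, IsVertex c h a →
      eval a w = eval a u ∧ ∀ k : Fin d, eval a (pderiv k w) = eval a (pderiv k u)) :
    ∀ i : Fin d,
      ∫ x in box c h,
        eval x (pderiv i (pderiv i (u - w))) * eval x (pderiv i (pderiv i v)) =
      - ∑ j ∈ Finset.univ.erase i,
          (h j ^ 2 / 3) *
            ∫ x in box c h,
              eval x (pderiv i (pderiv i (pderiv j (pderiv j u)))) *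
                eval x (pderiv i (pderiv i v)) := by
  intro i
  exact adini_pure_terms_identity_general hh i (totalDegree_pderiv_sq_pderiv_sq_eq_zero hu i)
    (pderiv_pderiv_mem_Q1_of_mem_PA i hw) (pderiv_pderiv_mem_Q1_of_mem_PA i hv)
    fun a ha => ⟨(hmatch a ha).1, (hmatch a ha).2 i⟩
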